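/- For any interpretation I* of the variables in F* that is diverse over Σ*_p(F), there is a truth assignment J to the variables of encf(F*) that obeys transitivity and satisfies J[encf(F*)] = I*[F*]. -/

import Mathlib

mutual
inductive EufTerm (Fn Pr : Type) : Type
  | app : Fn → List (EufTerm Fn Pr) → EufTerm Fn Pr
  | ite : EufFormula Fn Pr → EufTerm Fn Pr → EufTerm Fn Pr → EufTerm Fn Pr
inductive EufFormula (Fn Pr : Type) : Type
  | tt : EufFormula Fn Pr
  | ff : EufFormula Fn Pr
  | not : EufFormula Fn Pr → EufFormula Fn Pr
  | and : EufFormula Fn Pr → EufFormula Fn Pr → EufFormula Fn Pr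
  | or : EufFormula Fn Pr → EufFormula Fn Pr → EufFormula Fn Pr
  | eq : EufTerm Fn Pr → EufTerm Fn Pr → EufFormula Fn Pr
  | papp : Pr → List (EufTerm Fn Pr) → EufFormula Fn Pr
end

structure Interp (Fn Pr : Type) (D : Type u) where
  fn : Fn → List D → D
  pr : Pr → List D → Bool

open Classical in
mutual
noncomputable def evalT {Fn Pr : Type} {D : Type} (I : Interp Fn Pr D) : EufTerm Fn Pr → D
  | .app f args => I.fn f (args.attach.map (fun t => evalT I t.1))
  | .ite G T1 T2 => if evalF I G then evalT I T1 else evalT I T2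
termination_by t => sizeOf t
decreasing_by
  all_goals simp_wf
  all_goals try omega
  all_goals (have := List.sizeOf_lt_of_mem t.2; omega)
noncomputable def evalF {Fn Pr : Type} {D : Type} (I : Interp Fn Pr D) : EufFormula Fn Pr → Bool
  | .tt => true
  | .ff => false
  | .not G => !evalF I G
  | .and G1 G2 => evalF I G1 && evalF I G2
  | .or G1 G2 => evalF I G1 || evalF I G2
  | .eq T1 T2 => decide (evalT I T1 = evalT I T2)
  | .papp p args => I.pr p (args.attach.map (fun t => evalT I t.1))
termination_by g => sizeOf g
decreasing_by
  all_goals simp_wf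
  all_goals try omega
  all_goals (have := List.sizeOf_lt_of_mem t.2; omega)
end
def ValidOn {Fn Pr : Type} (F : EufFormula Fn Pr) (D : Type) : Prop :=
  ∀ I : Interp Fn Pr D, evalF I F = true

def UniversallyValid {Fn Pr : Type} (F : EufFormula Fn Pr) : Prop :=
  ∀ D : Type, Nonempty D → ValidOn F D

/-- Expressions: terms or formulas. -/
inductive EufExpr (Fn Pr : Type) : Type
  | t : EufTerm Fn Pr → EufExpr Fn Pr
  | f : EufFormula Fn Pr → EufExpr Fn Pr

/-- Immediate (proper) subexpression relation. -/
inductive ImmSub {Fn Pr : Type} : EufExpr Fn Pr → EufExpr Fn Pr → Prop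
  | appArg {g : Fn} {args : List (EufTerm Fn Pr)} {T : EufTerm Fn Pr} :
      T ∈ args → ImmSub (.t T) (.t (.app g args))
  | iteC {G : EufFormula Fn Pr} {T1 T2 : EufTerm Fn Pr} : ImmSub (.f G) (.t (.ite G T1 T2))
  | ite1 {G : EufFormula Fn Pr} {T1 T2 : EufTerm Fn Pr} : ImmSub (.t T1) (.t (.ite G T1 T2))
  | ite2 {G : EufFormula Fn Pr} {T1 T2 : EufTerm Fn Pr} : ImmSub (.t T2) (.t (.ite G T1 T2))
  | not {G : EufFormula Fn Pr} : ImmSub (.f G) (.f (.not G))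
  | andL {G1 G2 : EufFormula Fn Pr} : ImmSub (.f G1) (.f (.and G1 G2))
  | andR {G1 G2 : EufFormula Fn Pr} : ImmSub (.f G2) (.f (.and G1 G2))
  | orL {G1 G2 : EufFormula Fn Pr} : ImmSub (.f G1) (.f (.or G1 G2))
  | orR {G1 G2 : EufFormula Fn Pr} : ImmSub (.f G2) (.f (.or G1 G2))
  | eqL {T1 T2 : EufTerm Fn Pr} : ImmSub (.t T1) (.f (.eq T1 T2))
  | eqR {T1 T2 : EufTerm Fn Pr} : ImmSub (.t T2) (.f (.eq T1 T2))
  | pappArg {p : Pr} {args : List (EufTerm Fn Pr)} {T : EufTerm Fn Pr} :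
      T ∈ args → ImmSub (.t T) (.f (.papp p args))

/-- `SubExpr a b`: `a` occurs (as a subexpression) in `b`. -/
def SubExpr {Fn Pr : Type} (a b : EufExpr Fn Pr) : Prop := Relation.ReflTransGen ImmSub a b

def TermInT {Fn Pr : Type} (T S : EufTerm Fn Pr) : Prop := SubExpr (.t T) (.t S)
def TermInF {Fn Pr : Type} (T : EufTerm Fn Pr) (F : EufFormula Fn Pr) : Prop :=
  SubExpr (.t T) (.f F)
def FormulaInT {Fn Pr : Type} (G : EufFormula Fn Pr) (S : EufTerm Fn Pr) : Prop :=
  SubExpr (.f G) (.t S)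
def FormulaInF {Fn Pr : Type} (G F : EufFormula Fn Pr) : Prop := SubExpr (.f G) (.f F)

def IsAppTerm {Fn Pr : Type} : EufTerm Fn Pr → Prop
  | .app _ _ => True
  | _ => False

/-- `𝒯(F)`: the function application terms occurring in `F`. -/
def AppTermsF {Fn Pr : Type} (F : EufFormula Fn Pr) : Set (EufTerm Fn Pr) :=
  {T | IsAppTerm T ∧ TermInF T F}

/-- A function symbol occurs in `F` when some application of it occurs in `F`. -/
def FnInF {Fn Pr : Type} (g : Fn) (F : EufFormula Fn Pr) : Prop :=
  ∃ args, TermInF (EufTerm.app g args) F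

def PrInF {Fn Pr : Type} (p : Pr) (F : EufFormula Fn Pr) : Prop :=
  ∃ args, FormulaInF (EufFormula.papp p args) F

/-- `I` is diverse for `F` with respect to the set `Sg` of function symbols. -/
def DiverseFor {Fn Pr D : Type} (I : Interp Fn Pr D) (F : EufFormula Fn Pr)
    (Sg : Set Fn) : Prop :=
  ∀ (g : Fn) (args : List (EufTerm Fn Pr)), g ∈ Sg →
    TermInF (EufTerm.app g args) F →
    ∀ T2 ∈ AppTermsF F, evalT I (EufTerm.app g args) = evalT I T2 →
      ∃ args2, T2 = EufTerm.app g args2 ∧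
        List.Forall₂ (fun a b => evalT I a = evalT I b) args args2

mutual
/-- PEUF g-terms, where `isP` designates the p-function symbols. -/
inductive IsGTerm {Fn Pr : Type} (isP : Fn → Prop) : EufTerm Fn Pr → Prop
  | ite {G : EufFormula Fn Pr} {T1 T2 : EufTerm Fn Pr} :
      IsGFormula isP G → IsGTerm isP T1 → IsGTerm isP T2 → IsGTerm isP (.ite G T1 T2)
  | app {g : Fn} {args : List (EufTerm Fn Pr)} :
      ¬ isP g → (∀ T ∈ args, IsPTerm isP T) → IsGTerm isP (.app g args)
/-- PEUF p-terms. -/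
inductive IsPTerm {Fn Pr : Type} (isP : Fn → Prop) : EufTerm Fn Pr → Prop
  | g {T : EufTerm Fn Pr} : IsGTerm isP T → IsPTerm isP T
  | ite {G : EufFormula Fn Pr} {T1 T2 : EufTerm Fn Pr} :
      IsGFormula isP G → IsPTerm isP T1 → IsPTerm isP T2 → IsPTerm isP (.ite G T1 T2)
  | app {g : Fn} {args : List (EufTerm Fn Pr)} :
      isP g → (∀ T ∈ args, IsPTerm isP T) → IsPTerm isP (.app g args)
/-- PEUF g-formulas. -/
inductive IsGFormula {Fn Pr : Type} (isP : Fn → Prop) : EufFormula Fn Pr → Prop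
  | tt : IsGFormula isP .tt
  | ff : IsGFormula isP .ff
  | not {G : EufFormula Fn Pr} : IsGFormula isP G → IsGFormula isP (.not G)
  | and {G1 G2 : EufFormula Fn Pr} :
      IsGFormula isP G1 → IsGFormula isP G2 → IsGFormula isP (.and G1 G2)
  | or {G1 G2 : EufFormula Fn Pr} :
      IsGFormula isP G1 → IsGFormula isP G2 → IsGFormula isP (.or G1 G2)
  | eq {T1 T2 : EufTerm Fn Pr} :
      IsGTerm isP T1 → IsGTerm isP T2 → IsGFormula isP (.eq T1 T2)
  | papp {p : Pr} {args : List (EufTerm Fn Pr)} :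
      (∀ T ∈ args, IsPTerm isP T) → IsGFormula isP (.papp p args)
/-- PEUF p-formulas. -/
inductive IsPFormula {Fn Pr : Type} (isP : Fn → Prop) : EufFormula Fn Pr → Prop
  | g {G : EufFormula Fn Pr} : IsGFormula isP G → IsPFormula isP G
  | and {G1 G2 : EufFormula Fn Pr} :
      IsPFormula isP G1 → IsPFormula isP G2 → IsPFormula isP (.and G1 G2)
  | or {G1 G2 : EufFormula Fn Pr} :
      IsPFormula isP G1 → IsPFormula isP G2 → IsPFormula isP (.or G1 G2)
  | eq {T1 T2 : EufTerm Fn Pr} :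
      IsPTerm isP T1 → IsPTerm isP T2 → IsPFormula isP (.eq T1 T2)
end

/-- The p-function symbols occurring in `F`. -/
def PSymbolsIn {Fn Pr : Type} (isP : Fn → Prop) (F : EufFormula Fn Pr) : Set Fn :=
  {g | isP g ∧ FnInF g F}

/-- `I` is maximally diverse for the p-formula `F`. -/
def MaxDiverse {Fn Pr D : Type} (isP : Fn → Prop) (I : Interp Fn Pr D)
    (F : EufFormula Fn Pr) : Prop :=
  DiverseFor I F (PSymbolsIn isP F)

/-- `I'` refines `I` on the term set `Ts`. -/
def RefinesOn {Fn Pr D D' : Type} (I' : Interp Fn Pr D') (I : Interp Fn Pr D)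
    (Ts : Set (EufTerm Fn Pr)) : Prop :=
  ∀ T1 ∈ Ts, ∀ T2 ∈ Ts, evalT I' T1 = evalT I' T2 → evalT I T1 = evalT I T2

def ProperRefinesOn {Fn Pr D D' : Type} (I' : Interp Fn Pr D') (I : Interp Fn Pr D)
    (Ts : Set (EufTerm Fn Pr)) : Prop :=
  RefinesOn I' I Ts ∧
    ∃ T1 ∈ Ts, ∃ T2 ∈ Ts, evalT I T1 = evalT I T2 ∧ evalT I' T1 ≠ evalT I' T2
/-- Propositional formulas over a variable type `V`. -/
inductive PropForm (V : Type) : Type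
  | tt : PropForm V
  | ff : PropForm V
  | var : V → PropForm V
  | not : PropForm V → PropForm V
  | and : PropForm V → PropForm V → PropForm V
  | or : PropForm V → PropForm V → PropForm V

/-- Evaluation of a propositional formula under a truth assignment. -/
def PropForm.evalP {V : Type} (J : V → Bool) : PropForm V → Bool
  | .tt => true
  | .ff => false
  | .var v => J v
  | .not φ => !φ.evalP J
  | .and φ ψ => φ.evalP J && ψ.evalP J
  | .or φ ψ => φ.evalP J || ψ.evalP J

/-- Variables of the propositional encoding: the propositional variables of `F*`
together with the equality variables `e_{i,j}`. -/
abbrev EncVar (Pr : Type) : Type := Pr ⊕ ℕ × ℕ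

/-- `e_{[i,j]}`. -/
def evarF {Pr : Type} (i j : ℕ) : PropForm (EncVar Pr) :=
  if i = j then .tt else if i < j then .var (.inr (i, j)) else .var (.inr (j, i))

def bigOr {V : Type} (l : List (PropForm V)) : PropForm V := l.foldr .or .ff

open Classical in
mutual
/-- `enct_i(T)`: the conditions under which term `T` selects the domain variable `v i`. -/
noncomputable def enct {Fn Pr : Type} (v : ℕ → Fn) (N M : ℕ) (i : ℕ) :
    EufTerm Fn Pr → PropForm (EncVar Pr)
  | .app g _ => if g = v i then .tt else .ff
  | .ite G T1 T2 =>
      .or (.and (encf v N M G) (enct v N M i T1))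
          (.and (.not (encf v N M G)) (enct v N M i T2))
/-- `encf(G)`: the propositional encoding of the formula `G`. -/
noncomputable def encf {Fn Pr : Type} (v : ℕ → Fn) (N M : ℕ) :
    EufFormula Fn Pr → PropForm (EncVar Pr)
  | .tt => .tt
  | .ff => .ff
  | .not G => .not (encf v N M G)
  | .and G1 G2 => .and (encf v N M G1) (encf v N M G2)
  | .or G1 G2 => .or (encf v N M G1) (encf v N M G2)
  | .papp p _ => .var (.inl p)
  | .eq T1 T2 =>
      .or
        (bigOr ((List.range' 1 N).flatMap (fun i =>
          (List.range' 1 N).map (fun j =>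
            PropForm.and (enct v N M i T1) (.and (evarF i j) (enct v N M j T2))))))
        (bigOr ((List.range' (N+1) M).map (fun i =>
          PropForm.and (enct v N M i T1) (enct v N M i T2))))
end

/-- A truth assignment obeys transitivity on the equality variables `e_{i,j}`, `1 ≤ i,j ≤ N`. -/
def ObeysTrans {Pr : Type} (J : EncVar Pr → Bool) (N : ℕ) : Prop :=
  ∀ i j k, 1 ≤ i → i ≤ N → 1 ≤ j → j ≤ N → 1 ≤ k → k ≤ N →
    (evarF (Pr := Pr) i j).evalP J = true → (evarF (Pr := Pr) j k).evalP J = true →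
    (evarF (Pr := Pr) i k).evalP J = true

open Classical in
/-- `sel_{I}(T)`: the index of the domain variable selected by the ITE controls of `T`. -/
noncomputable def selT {Fn Pr D : Type} (v : ℕ → Fn) (NM : ℕ) (I : Interp Fn Pr D) :
    EufTerm Fn Pr → ℕ
  | .app g _ => sInf {i | 1 ≤ i ∧ i ≤ NM ∧ g = v i}
  | .ite G T1 T2 => if evalF I G = true then selT v NM I T1 else selT v NM I T2

/-- `F` contains only domain variables (among `v 1, …, v NM`) and propositional variables. -/
def VarsOnlyEnum {Fn Pr : Type} (v : ℕ → Fn) (NM : ℕ) (F : EufFormula Fn Pr) : Prop :=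
  (∀ (g : Fn) (args : List (EufTerm Fn Pr)), TermInF (EufTerm.app g args) F →
      args = [] ∧ ∃ i, 1 ≤ i ∧ i ≤ NM ∧ g = v i) ∧
  (∀ (p : Pr) (args : List (EufTerm Fn Pr)), FormulaInF (EufFormula.papp p args) F →
      args = [])

/-!
Let `J` give `e_{i,j}` the truth value of `I(v_i) = I(v_j)`. Transitivity is inherited from
equality. The ITE controls of a term `T` select one domain variable `x`, so `T` evaluates to
`I(x)` and `enct_i(T)` holds exactly when `x` is `v_i`. An equation is therefore encoded correctly
when both sides select among `v_1, …, v_N`; otherwise one side selects a variable of `Σ*_p(F)`,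
and by diversity equality of the values forces both sides to select that same variable.
-/

theorem evalP_bigOr {V : Type} (J : V → Bool) (l : List (PropForm V)) :
    (bigOr l).evalP J = l.any (·.evalP J) := by
  induction l with
  | nil => rfl
  | cons φ l ih => exact congrArg (φ.evalP J || ·) ih

theorem evalP_encf_eq_iff {Fn Pr : Type} (v : ℕ → Fn) (N M : ℕ) (J : EncVar Pr → Bool)
    (T₁ T₂ : EufTerm Fn Pr) :
    (encf v N M (.eq T₁ T₂)).evalP J = true ↔
      (∃ i ∈ Set.Icc 1 N, ∃ j ∈ Set.Icc 1 N, (enct v N M i T₁).evalP J = true ∧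
        (evarF i j).evalP J = true ∧ (enct v N M j T₂).evalP J = true) ∨
      ∃ i ∈ Set.Icc (N + 1) (N + M),
        (enct v N M i T₁).evalP J = true ∧ (enct v N M i T₂).evalP J = true := by
  have mem_range'_iff (a n i : ℕ) : i ∈ List.range' (a + 1) n ↔ i ∈ Set.Icc (a + 1) (a + n) := by
    rw [List.mem_range'_1, Set.mem_Icc]
    lia
  simp only [encf, PropForm.evalP, evalP_bigOr, Bool.or_eq_true, List.any_flatMap, List.any_map,
    List.any_eq_true, Function.comp_apply, Bool.and_eq_true, mem_range'_iff, Nat.zero_add]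

section Interpretation

variable {Fn Pr D : Type}

open Classical in
/-- The truth assignment induced by an interpretation: propositional variables keep their value,
and `e_{i,j}` records whether `v i` and `v j` have the same value. -/
noncomputable def inducedAssignment (v : ℕ → Fn) (I : Interp Fn Pr D) : EncVar Pr → Bool
  | .inl p => I.pr p []
  | .inr (i, j) => decide (I.fn (v i) [] = I.fn (v j) [])

theorem evalP_evarF_inducedAssignment_iff (v : ℕ → Fn) (I : Interp Fn Pr D) (i j : ℕ) :
    (evarF i j).evalP (inducedAssignment v I) = true ↔ I.fn (v i) [] = I.fn (v j) [] := by
  unfold evarF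
  split_ifs with h_eq h_lt
  · simp [PropForm.evalP, h_eq]
  · simp [PropForm.evalP, inducedAssignment]
  · simp [PropForm.evalP, inducedAssignment, eq_comm]

theorem obeysTrans_inducedAssignment (v : ℕ → Fn) (I : Interp Fn Pr D) (N : ℕ) :
    ObeysTrans (inducedAssignment v I) N := by
  intro i j k _ _ _ _ _ _ hij hjk
  rw [evalP_evarF_inducedAssignment_iff] at hij hjk ⊢
  exact hij.trans hjk

/-- Diversity over the p-function variables `v (N + 1), …, v (N + M)`. It compares variables
rather than indices, so that `v` may list a variable more than once. -/
def DiverseOverPVars (v : ℕ → Fn) (N M : ℕ) (I : Interp Fn Pr D) : Prop :=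
  ∀ i ∈ Set.Icc (N + 1) (N + M), ∀ j ∈ Set.Icc 1 (N + M),
    I.fn (v i) [] = I.fn (v j) [] → v i = v j

/-- `VarsOnlyEnum` for an arbitrary expression, a condition that passes to subexpressions. -/
def ExprVarsOnlyEnum (v : ℕ → Fn) (n : ℕ) (E : EufExpr Fn Pr) : Prop :=
  (∀ (g : Fn) (args : List (EufTerm Fn Pr)), SubExpr (.t (.app g args)) E →
      args = [] ∧ ∃ i, 1 ≤ i ∧ i ≤ n ∧ g = v i) ∧
  (∀ (p : Pr) (args : List (EufTerm Fn Pr)), SubExpr (.f (.papp p args)) E → args = [])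

variable {v : ℕ → Fn} {n N M : ℕ}

theorem ExprVarsOnlyEnum.of_immSub {E E' : EufExpr Fn Pr}
    (h : ExprVarsOnlyEnum v n E) (hE : ImmSub E' E) : ExprVarsOnlyEnum v n E' :=
  ⟨fun g args hg => h.1 g args (hg.tail hE), fun p args hp => h.2 p args (hp.tail hE)⟩

/-- The function symbol at the leaf of `T` that its ITE controls select under `I`. Unlike the
index `selT`, it does not depend on an enumeration of the symbols. -/
noncomputable def selectedSymbol (I : Interp Fn Pr D) : EufTerm Fn Pr → Fn
  | .app g _ => g
  | .ite G T₁ T₂ => if evalF I G = true then selectedSymbol I T₁ else selectedSymbol I T₂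

theorem exists_selectedSymbol_eq (I : Interp Fn Pr D) :
    ∀ {T : EufTerm Fn Pr}, ExprVarsOnlyEnum v n (.t T) →
      ∃ i ∈ Set.Icc 1 n, selectedSymbol I T = v i
  | .app g args, h => by
    obtain ⟨-, i, hi_pos, hi_le, hg⟩ := h.1 g args .refl
    exact ⟨i, ⟨hi_pos, hi_le⟩, hg⟩
  | .ite G T₁ T₂, h => by
    rw [selectedSymbol]
    split_ifs
    · exact exists_selectedSymbol_eq I (h.of_immSub .ite1)
    · exact exists_selectedSymbol_eq I (h.of_immSub .ite2)

theorem evalT_eq_fn_selectedSymbol (I : Interp Fn Pr D) :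
    ∀ {T : EufTerm Fn Pr}, ExprVarsOnlyEnum v n (.t T) →
      evalT I T = I.fn (selectedSymbol I T) []
  | .app g args, h => by
    obtain ⟨rfl, -⟩ := h.1 g args .refl
    simp [evalT, selectedSymbol]
  | .ite G T₁ T₂, h => by
    rw [evalT, selectedSymbol]
    split_ifs
    · exact evalT_eq_fn_selectedSymbol I (h.of_immSub .ite1)
    · exact evalT_eq_fn_selectedSymbol I (h.of_immSub .ite2)

variable {I : Interp Fn Pr D}

theorem diverseOverPVars_of_forall_ne
    (h : ∀ i, N + 1 ≤ i → i ≤ N + M → ∀ j, 1 ≤ j → j ≤ N + M → j ≠ i →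
      I.fn (v i) [] ≠ I.fn (v j) []) : DiverseOverPVars v N M I := by
  rintro i ⟨hi_gt, hi_le⟩ j ⟨hj_pos, hj_le⟩ hij
  by_contra hne
  exact h i hi_gt hi_le j hj_pos hj_le (fun hji => hne (congrArg v hji.symm)) hij

theorem DiverseOverPVars.fn_eq_iff (hdiv : DiverseOverPVars v N M I) {x y : Fn}
    (hx : ∃ i ∈ Set.Icc 1 (N + M), x = v i) (hy : ∃ i ∈ Set.Icc 1 (N + M), y = v i) :
    I.fn x [] = I.fn y [] ↔
      (∃ i ∈ Set.Icc 1 N, ∃ j ∈ Set.Icc 1 N,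
        x = v i ∧ I.fn (v i) [] = I.fn (v j) [] ∧ y = v j) ∨
      ∃ i ∈ Set.Icc (N + 1) (N + M), x = v i ∧ y = v i := by
  constructor
  · intro hxy
    obtain ⟨a, ha, rfl⟩ := hx
    obtain ⟨b, hb, rfl⟩ := hy
    rcases le_or_gt a N with haN | haN
    · rcases le_or_gt b N with hbN | hbN
      · exact .inl ⟨a, ⟨ha.1, haN⟩, b, ⟨hb.1, hbN⟩, rfl, hxy, rfl⟩
      · have hb' : b ∈ Set.Icc (N + 1) (N + M) := ⟨hbN, hb.2⟩
        exact .inr ⟨b, hb', (hdiv b hb' a ha hxy.symm).symm, rfl⟩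
    · have ha' : a ∈ Set.Icc (N + 1) (N + M) := ⟨haN, ha.2⟩
      exact .inr ⟨a, ha', rfl, (hdiv a ha' b hb hxy).symm⟩
  · rintro (⟨i, -, j, -, rfl, hij, rfl⟩ | ⟨i, -, rfl, rfl⟩)
    · exact hij
    · rfl

mutual

theorem evalP_enct_iff (hdiv : DiverseOverPVars v N M I) (i : ℕ) :
    ∀ {T : EufTerm Fn Pr}, ExprVarsOnlyEnum v (N + M) (.t T) →
      ((enct v N M i T).evalP (inducedAssignment v I) = true ↔ selectedSymbol I T = v i)
  | .app g args, _ => by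
    rw [enct, selectedSymbol]
    split_ifs with hg <;> simp [PropForm.evalP, hg]
  | .ite G T₁ T₂, h => by
    have hG := evalP_encf hdiv (h.of_immSub .iteC)
    have hT₁ := evalP_enct_iff hdiv i (h.of_immSub .ite1)
    have hT₂ := evalP_enct_iff hdiv i (h.of_immSub .ite2)
    rw [enct, selectedSymbol]
    split_ifs with hI <;> simp [PropForm.evalP, hG, hI, hT₁, hT₂]

theorem evalP_encf (hdiv : DiverseOverPVars v N M I) :
    ∀ {G : EufFormula Fn Pr}, ExprVarsOnlyEnum v (N + M) (.f G) →
      (encf v N M G).evalP (inducedAssignment v I) = evalF I G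
  | .tt, _ => by simp only [encf, evalF, PropForm.evalP]
  | .ff, _ => by simp only [encf, evalF, PropForm.evalP]
  | .not G, h => by
    simp only [encf, evalF, PropForm.evalP, evalP_encf hdiv (h.of_immSub .not)]
  | .and G₁ G₂, h => by
    simp only [encf, evalF, PropForm.evalP, evalP_encf hdiv (h.of_immSub .andL),
      evalP_encf hdiv (h.of_immSub .andR)]
  | .or G₁ G₂, h => by
    simp only [encf, evalF, PropForm.evalP, evalP_encf hdiv (h.of_immSub .orL),
      evalP_encf hdiv (h.of_immSub .orR)]
  | .eq T₁ T₂, h => by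
    have h₁ := h.of_immSub .eqL
    have h₂ := h.of_immSub .eqR
    have hfn := hdiv.fn_eq_iff (exists_selectedSymbol_eq I h₁) (exists_selectedSymbol_eq I h₂)
    rw [Bool.eq_iff_iff, evalP_encf_eq_iff]
    simp only [evalF, decide_eq_true_eq, evalT_eq_fn_selectedSymbol I h₁,
      evalT_eq_fn_selectedSymbol I h₂, hfn, evalP_enct_iff hdiv _ h₁, evalP_enct_iff hdiv _ h₂,
      evalP_evarF_inducedAssignment_iff]
  | .papp p args, h => by
    obtain rfl := h.2 p args .refl
    simp [encf, evalF, PropForm.evalP, inducedAssignment]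

end

end Interpretation

theorem F_eF_lemma_general {Fn Pr D : Type} (v : ℕ → Fn) (N M : ℕ) (I : Interp Fn Pr D)
    (hdiv : DiverseOverPVars v N M I) :
    ∃ J : EncVar Pr → Bool, ObeysTrans J N ∧
      ∀ F : EufFormula Fn Pr, VarsOnlyEnum v (N + M) F →
        (encf v N M F).evalP J = evalF I F :=
  ⟨inducedAssignment v I, obeysTrans_inducedAssignment v I N, fun _ hF => evalP_encf hdiv hF⟩

/-- For any interpretation `I*` of the variables of `F*` that is diverse
over `Σ*_p(F)` (the variables `v_{N+1}, …, v_{N+M}`), there is a truth assignment `J`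
obeying transitivity with `J[encf(F*)] = I*[F*]`. -/
theorem F_eF_lemma {Fn Pr D : Type} (v : ℕ → Fn) (N M : ℕ)
    (Fstar : EufFormula Fn Pr) (hvars : VarsOnlyEnum v (N + M) Fstar)
    (hinj : ∀ i j, 1 ≤ i → i ≤ N + M → 1 ≤ j → j ≤ N + M → v i = v j → i = j)
    (I : Interp Fn Pr D)
    (hdiv : ∀ i, N + 1 ≤ i → i ≤ N + M → ∀ j, 1 ≤ j → j ≤ N + M → j ≠ i →
      I.fn (v i) [] ≠ I.fn (v j) []) :
    ∃ J : EncVar Pr → Bool, ObeysTrans J N ∧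
      (encf v N M Fstar).evalP J = evalF I Fstar := by
  obtain ⟨J, hJ, hencf⟩ := F_eF_lemma_general v N M I (diverseOverPVars_of_forall_ne hdiv)
  exact ⟨J, hJ, hencf Fstar hvars⟩
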